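/- arXiv:2002.02122 — 3 statements merged into one kernel-verified Lean document; each statement's English description precedes it below -/
import Mathlib

section
/- Let k be an algebraically closed field of characteristic 2, let A ∈ k be nonzero, and let C_A be the curve y^2 + y = A·x^5 + A·x^3. Every automorphism of C_A is of the form (x,y) ↦ (x + t, y + f_2 x^2 + f_1 x + f_0) where t satisfies t^16 + t^8 + A^{-2} t^2 + A^{-3} t = 0, f_1 = A t^4 + A t^2, f_2 = A^2 t^8 + A^2 t^4 + A t, and f_0^2 + f_0 = A t^5 + A t^3. Conversely every such choice gives an automorphism. In particular, the automorphism group of C_A has order 32. -/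
open Polynomial

namespace Stmt1

/-- The defining polynomial `Y² + Y - (Ax⁵ + Ax³)` of the affine model of the
supersingular genus-2 curve `C_A : y² + y = Ax⁵ + Ax³`. -/
noncomputable def curvePolyA {k : Type*} [Field k] (A : k) : Polynomial (k[X]) :=
  X ^ 2 + X - C (C A * X ^ 5 + C A * X ^ 3)

/-- The affine coordinate ring of `C_A`. -/
noncomputable abbrev CoordRing {k : Type*} [Field k] (A : k) : Type _ :=
  AdjoinRoot (curvePolyA A)

/-!
The degree of the norm of `z` from `S = k[x, y]/(y² + y - f)` to `k[x]` is `dim_k S/(z)`, so it is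
preserved by every automorphism over `k`. Since `p(x) + q(x) y` has norm of degree `max (2 deg p)
(2 deg q + 5)` for `q ≠ 0`, an automorphism maps `x` to an element of norm degree 2 and `y` to one
of norm degree 5, that is, `x ↦ ax + t` and `y ↦ sy + r(x)` with `deg r ≤ 2`. Comparing
coefficients in the equation of the curve forces `a = s = 1` and determines `r` from `t` up to its
constant term, which leaves one polynomial condition of degree 16 on `t`. Its derivative is the
constant `A⁻³`, so there are 16 values of `t`, and for each of them two constant terms.
-/

section HyperellipticBasis

variable {k S : Type*} [Field k] [CommRing S] [Algebra k[X] S]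

/-- The basis `1, y` over `k[x]` of the coordinate ring of an affine hyperelliptic curve
`y² + h(x) y = f(x)` with one point at infinity: `deg f = 2g + 1` and `deg h ≤ g`. -/
structure IsHyperellipticBasis (b : Module.Basis (Fin 2) k[X] S) (h f : k[X]) (g : ℕ) :
    Prop where
  zero : b 0 = 1
  sq_add : b 1 ^ 2 + algebraMap k[X] S h * b 1 = algebraMap k[X] S f
  natDegree_le : h.natDegree ≤ g
  natDegree_eq : f.natDegree = 2 * g + 1

namespace IsHyperellipticBasis

variable {b : Module.Basis (Fin 2) k[X] S} {h f : k[X]} {g : ℕ}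

lemma smul_add_smul (hb : IsHyperellipticBasis b h f g) (p q : k[X]) :
    p • b 0 + q • b 1 = algebraMap k[X] S p + algebraMap k[X] S q * b 1 := by
  rw [hb.zero, Algebra.smul_def, Algebra.smul_def, mul_one]

lemma exists_eq_add_mul (hb : IsHyperellipticBasis b h f g) (z : S) :
    ∃ p q, z = algebraMap k[X] S p + algebraMap k[X] S q * b 1 :=
  ⟨b.repr z 0, b.repr z 1, by
    rw [← hb.smul_add_smul, ← Fin.sum_univ_two (fun i ↦ b.repr z i • b i), b.sum_repr]⟩

lemma repr_add_mul (hb : IsHyperellipticBasis b h f g) (p q : k[X]) :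
    ⇑(b.repr (algebraMap k[X] S p + algebraMap k[X] S q * b 1)) = ![p, q] := by
  rw [← hb.smul_add_smul]
  ext i
  fin_cases i <;> simp

lemma add_mul_inj (hb : IsHyperellipticBasis b h f g) {p q p' q' : k[X]} :
    algebraMap k[X] S p + algebraMap k[X] S q * b 1 =
      algebraMap k[X] S p' + algebraMap k[X] S q' * b 1 ↔ p = p' ∧ q = q' := by
  rw [← b.repr.injective.eq_iff, DFunLike.ext'_iff, hb.repr_add_mul, hb.repr_add_mul]
  simp

lemma norm_add_mul (hb : IsHyperellipticBasis b h f g) (p q : k[X]) :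
    Algebra.norm k[X] (algebraMap k[X] S p + algebraMap k[X] S q * b 1) =
      p ^ 2 - p * q * h - q ^ 2 * f := by
  have mul_y : (algebraMap k[X] S p + algebraMap k[X] S q * b 1) * b 1 =
      algebraMap k[X] S (q * f) + algebraMap k[X] S (p - q * h) * b 1 := by
    simp only [map_sub, map_mul]
    linear_combination algebraMap k[X] S q * hb.sq_add
  rw [Algebra.norm_eq_matrix_det b, Matrix.det_fin_two]
  simp only [Algebra.leftMulMatrix_eq_repr_mul, hb.zero, mul_one, mul_y, hb.repr_add_mul,
    Matrix.cons_val_zero, Matrix.cons_val_one]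
  ring

lemma natDegree_norm_algebraMap (b : Module.Basis (Fin 2) k[X] S) (p : k[X]) :
    (Algebra.norm k[X] (algebraMap k[X] S p)).natDegree = 2 * p.natDegree := by
  rw [Algebra.norm_algebraMap_of_basis b, Fintype.card_fin, natDegree_pow]

/-- The degrees of `p ^ 2` and `q ^ 2 * f` have different parities, so the leading terms cannot
cancel. -/
lemma natDegree_norm_add_mul (hb : IsHyperellipticBasis b h f g) (p : k[X]) {q : k[X]}
    (hq : q ≠ 0) :
    (Algebra.norm k[X] (algebraMap k[X] S p + algebraMap k[X] S q * b 1)).natDegree =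
      max (2 * p.natDegree) (2 * q.natDegree + (2 * g + 1)) := by
  have hf : f ≠ 0 := ne_zero_of_natDegree_gt (n := 0) (by rw [hb.natDegree_eq]; lia)
  have deg_sq : (p ^ 2).natDegree = 2 * p.natDegree := natDegree_pow p 2
  have deg_sq_mul : (q ^ 2 * f).natDegree = 2 * q.natDegree + (2 * g + 1) := by
    rw [natDegree_mul (pow_ne_zero 2 hq) hf, natDegree_pow, hb.natDegree_eq]
  have deg_cross : (p * q * h).natDegree ≤ p.natDegree + q.natDegree + g :=
    natDegree_mul_le.trans (add_le_add natDegree_mul_le hb.natDegree_le)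
  rw [hb.norm_add_mul]
  rcases lt_or_ge (2 * p.natDegree) (2 * q.natDegree + (2 * g + 1)) with hlt | hge
  · rw [max_eq_right hlt.le, natDegree_sub_eq_right_of_natDegree_lt, deg_sq_mul]
    exact (natDegree_sub_le _ _).trans_lt (by lia)
  · rw [max_eq_left hge, sub_sub, natDegree_sub_eq_left_of_natDegree_lt, deg_sq]
    exact (natDegree_add_le _ _).trans_lt (by lia)

lemma norm_ne_zero (hb : IsHyperellipticBasis b h f g) {z : S} (hz : z ≠ 0) :
    Algebra.norm k[X] z ≠ 0 := by
  obtain ⟨p, q, rfl⟩ := hb.exists_eq_add_mul z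
  rcases eq_or_ne q 0 with rfl | hq
  · have hp : p ≠ 0 := by rintro rfl; simp at hz
    simpa [Algebra.norm_algebraMap_of_basis b] using hp
  · refine ne_zero_of_natDegree_gt (n := 0) ?_
    rw [hb.natDegree_norm_add_mul p hq]
    lia

lemma isDomain (hb : IsHyperellipticBasis b h f g) : IsDomain S :=
  have : Nontrivial S := ⟨b 0, 0, b.ne_zero 0⟩
  have : NoZeroDivisors S := ⟨fun {x y} hxy ↦ by
    by_contra! hne
    refine mul_ne_zero (hb.norm_ne_zero hne.1) (hb.norm_ne_zero hne.2) ?_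
    rw [← map_mul, hxy, ← map_zero (algebraMap k[X] S), Algebra.norm_algebraMap_of_basis b]
    simp⟩
  NoZeroDivisors.to_isDomain S

variable [Algebra k S] [IsScalarTower k k[X] S]

/-- The degree of the norm of `z` is the dimension of `S ⧸ (z)` over `k`, which does not refer to
the coordinate `x`. -/
lemma natDegree_norm_algEquiv_apply (hb : IsHyperellipticBasis b h f g) (σ : S ≃ₐ[k] S) (z : S) :
    (Algebra.norm k[X] (σ z)).natDegree = (Algebra.norm k[X] z).natDegree := by
  have := hb.isDomain
  rcases eq_or_ne z 0 with rfl | hz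
  · rw [map_zero]
  rw [← finrank_quotient_span_eq_natDegree_norm b hz,
    ← finrank_quotient_span_eq_natDegree_norm b ((map_ne_zero_iff σ σ.injective).2 hz)]
  refine (Ideal.quotientEquivAlg _ _ σ ?_).toLinearEquiv.finrank_eq.symm
  rw [Ideal.map_span, Set.image_singleton]
  rfl

lemma exists_algEquiv_apply_X (hb : IsHyperellipticBasis b h f g) (hg : 1 ≤ g)
    (σ : S ≃ₐ[k] S) :
    ∃ l : k[X], l.natDegree = 1 ∧ σ (algebraMap k[X] S X) = algebraMap k[X] S l := by
  obtain ⟨p, q, hσ⟩ := hb.exists_eq_add_mul (σ (algebraMap k[X] S X))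
  have hdeg := hb.natDegree_norm_algEquiv_apply σ (algebraMap k[X] S X)
  rw [natDegree_norm_algebraMap b, natDegree_X, hσ] at hdeg
  obtain rfl : q = 0 := by
    by_contra hq
    rw [hb.natDegree_norm_add_mul p hq] at hdeg
    lia
  rw [map_zero, zero_mul, add_zero] at hσ hdeg
  rw [natDegree_norm_algebraMap b] at hdeg
  exact ⟨p, by lia, hσ⟩

lemma exists_algEquiv_apply_y (hb : IsHyperellipticBasis b h f g) (σ : S ≃ₐ[k] S) :
    ∃ (r : k[X]) (s : k), r.natDegree ≤ g ∧ s ≠ 0 ∧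
      σ (b 1) = algebraMap k[X] S r + algebraMap k[X] S (C s) * b 1 := by
  obtain ⟨r, q, hσ⟩ := hb.exists_eq_add_mul (σ (b 1))
  have norm_y := hb.natDegree_norm_add_mul 0 one_ne_zero
  rw [map_zero, zero_add, map_one, one_mul] at norm_y
  have hdeg := hb.natDegree_norm_algEquiv_apply σ (b 1)
  rw [norm_y, natDegree_zero, natDegree_one, hσ] at hdeg
  have hq : q ≠ 0 := by
    rintro rfl
    rw [map_zero, zero_mul, add_zero, natDegree_norm_algebraMap b] at hdeg
    lia
  rw [hb.natDegree_norm_add_mul r hq] at hdeg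
  obtain ⟨s, rfl⟩ := natDegree_eq_zero.1 (show q.natDegree = 0 by lia)
  exact ⟨r, s, by lia, C_ne_zero.1 hq, hσ⟩

lemma algEquiv_apply_algebraMap (σ : S ≃ₐ[k] S) {l : k[X]}
    (hl : σ (algebraMap k[X] S X) = algebraMap k[X] S l) (p : k[X]) :
    σ (algebraMap k[X] S p) = algebraMap k[X] S (p.comp l) := by
  have hp : algebraMap k[X] S p = aeval (algebraMap k[X] S X) p := by
    rw [aeval_algebraMap_apply, aeval_X_left_apply]
  rw [hp, ← aeval_algHom_apply, hl, aeval_algebraMap_apply, comp_eq_aeval]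

/-- Substitute the images of `x` and `y` in `y² + hy = f` and compare coordinates. -/
lemma comp_eq_of_algEquiv (hb : IsHyperellipticBasis b h f g) (σ : S ≃ₐ[k] S) {l r : k[X]}
    {s : k} (hs : s ≠ 0) (hl : σ (algebraMap k[X] S X) = algebraMap k[X] S l)
    (hr : σ (b 1) = algebraMap k[X] S r + algebraMap k[X] S (C s) * b 1) :
    h.comp l = C s * h - 2 * r ∧ f.comp l = r ^ 2 + C s ^ 2 * f + h.comp l * r := by
  have key := congrArg σ hb.sq_add
  simp only [map_add, map_mul, map_pow, algEquiv_apply_algebraMap σ hl, hr] at key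
  obtain ⟨h₀, h₁⟩ := hb.add_mul_inj
    (p := r ^ 2 + C s ^ 2 * f + h.comp l * r) (q := C s * (2 * r - C s * h + h.comp l))
    (p' := f.comp l) (q' := 0) |>.1 <| by
      simp only [map_add, map_sub, map_mul, map_pow, map_ofNat, map_zero]
      linear_combination key - algebraMap k[X] S (C s) ^ 2 * hb.sq_add
  have := (mul_eq_zero.1 h₁).resolve_left (C_ne_zero.2 hs)
  exact ⟨by linear_combination this, h₀.symm⟩

end IsHyperellipticBasis

end HyperellipticBasis

section CoefficientComparison

lemma sum_C_mul_X_pow_eq_zero_iff {R : Type*} [Semiring R] {n : ℕ} {c : Fin n → R} :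
    ∑ i, C (c i) * X ^ (i : ℕ) = 0 ↔ c = 0 := by
  refine ⟨fun h ↦ funext fun j ↦ ?_, by rintro rfl; simp⟩
  simpa [finsetSum_coeff, coeff_C_mul_X_pow, Fin.val_inj] using congrArg (coeff · j) h

lemma eq_quadratic_of_natDegree_le_two {R : Type*} [Semiring R] {p : R[X]}
    (hp : p.natDegree ≤ 2) :
    p = C (p.coeff 2) * X ^ 2 + C (p.coeff 1) * X + C (p.coeff 0) := by
  conv_lhs => rw [p.as_sum_range_C_mul_X_pow' (n := 3) (by lia)]
  simp only [Finset.sum_range_succ, Finset.sum_range_zero, pow_zero, pow_one, mul_one, zero_add]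
  abel

/-- The right-hand side `Ax⁵ + Ax³` of the equation of `C_A`. -/
noncomputable def curveRHS {R : Type*} [Semiring R] (A : R) : R[X] := C A * X ^ 5 + C A * X ^ 3

lemma natDegree_curveRHS {R : Type*} [Semiring R] {A : R} (hA : A ≠ 0) :
    (curveRHS A).natDegree = 5 := by
  rw [curveRHS]
  compute_degree!

lemma sq_add_self_add_curveRHS_eq_comp_iff {R : Type*} [CommRing R] [CharP R 2]
    {A a t u v w : R} :
    (C w * X ^ 2 + C v * X + C u) ^ 2 + (C w * X ^ 2 + C v * X + C u) + curveRHS A =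
        (curveRHS A).comp (C a * X + C t) ↔
      u ^ 2 + u = A * t ^ 5 + A * t ^ 3 ∧ v = A * a * t ^ 4 + A * a * t ^ 2 ∧
      v ^ 2 + w = A * a ^ 2 * t ∧ A * a ^ 3 = A ∧ w ^ 2 = A * a ^ 4 * t ∧ A * a ^ 5 = A := by
  have hdiff : (C w * X ^ 2 + C v * X + C u) ^ 2 + (C w * X ^ 2 + C v * X + C u) + curveRHS A -
      (curveRHS A).comp (C a * X + C t) =
      ∑ i, C (![u ^ 2 + u - (A * t ^ 5 + A * t ^ 3), v - (A * a * t ^ 4 + A * a * t ^ 2),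
        v ^ 2 + w - A * a ^ 2 * t, A - A * a ^ 3, w ^ 2 - A * a ^ 4 * t, A - A * a ^ 5] i) *
          X ^ (i : ℕ) := by
    simp only [curveRHS, Fin.sum_univ_six, add_comp, mul_comp, pow_comp, C_comp, X_comp, map_sub,
      map_add, map_mul, map_pow, Matrix.cons_val, Fin.coe_ofNat_eq_mod]
    grind
  rw [← sub_eq_zero, hdiff, sum_C_mul_X_pow_eq_zero_iff]
  simp [funext_iff, Fin.forall_fin_succ, sub_eq_zero, eq_comm (a := A)]

end CoefficientComparison

section Translations

/-- `IsTranslation f t r` says that `(x, y) ↦ (x + t, y + r(x))` preserves the equation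
`y² + y = f(x)` of an Artin–Schreier curve in characteristic two. -/
def IsTranslation {R : Type*} [CommRing R] (f : R[X]) (t : R) (r : R[X]) : Prop :=
  r ^ 2 + r + f = taylor t f

lemma taylor_taylor_self {R : Type*} [CommRing R] [CharP R 2] (t : R) (p : R[X]) :
    taylor t (taylor t p) = p := by
  rw [taylor_taylor, CharTwo.add_self_eq_zero, taylor_zero]

/-- The inverse of `(x, y) ↦ (x + t, y + r(x))` is `(x, y) ↦ (x + t, y + r(x + t))`. -/
lemma IsTranslation.inverse {R : Type*} [CommRing R] [CharP R 2] {f r : R[X]} {t : R}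
    (h : IsTranslation f t r) : IsTranslation f t (taylor t r) := by
  have h' := congrArg (taylor t) h
  simp only [map_add, taylor_pow, taylor_taylor_self] at h'
  rw [IsTranslation, CharTwo.add_eq_iff_eq_add, CharTwo.add_eq_iff_eq_add.1 h', add_comm]

variable {k : Type*} [Field k] [CharP k 2]

lemma isTranslation_curveRHS_iff {A t u v w : k} (hA : A ≠ 0) :
    IsTranslation (curveRHS A) t (C w * X ^ 2 + C v * X + C u) ↔
      t ^ 16 + t ^ 8 + A⁻¹ ^ 2 * t ^ 2 + A⁻¹ ^ 3 * t = 0 ∧ v = A * t ^ 4 + A * t ^ 2 ∧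
      w = A ^ 2 * t ^ 8 + A ^ 2 * t ^ 4 + A * t ∧ u ^ 2 + u = A * t ^ 5 + A * t ^ 3 := by
  have coeffs := sq_add_self_add_curveRHS_eq_comp_iff (A := A) (a := 1) (t := t) (u := u)
    (v := v) (w := w)
  simp only [map_one, one_mul, ← taylor_apply, one_pow, mul_one] at coeffs
  have h16 : t ^ 16 + t ^ 8 + A⁻¹ ^ 2 * t ^ 2 + A⁻¹ ^ 3 * t = 0 ↔
      (A ^ 2 * t ^ 8 + A ^ 2 * t ^ 4 + A * t) ^ 2 = A * t := by
    rw [← mul_right_inj' (pow_ne_zero 4 hA)]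
    field_simp
    grind
  have h8 : v = A * t ^ 4 + A * t ^ 2 →
      (v ^ 2 + w = A * t ↔ w = A ^ 2 * t ^ 8 + A ^ 2 * t ^ 4 + A * t) := by
    rintro rfl
    grind
  rw [IsTranslation, coeffs, h16]
  grind

/-- The coefficients of `x⁵` and `x³` give `a⁵ = a³ = 1`. -/
lemma eq_one_of_sq_add_self_add_curveRHS_eq_comp {A a t : k} {r : k[X]} (hA : A ≠ 0)
    (hr : r.natDegree ≤ 2) (h : r ^ 2 + r + curveRHS A = (curveRHS A).comp (C a * X + C t)) :
    a = 1 := by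
  rw [eq_quadratic_of_natDegree_le_two hr, sq_add_self_add_curveRHS_eq_comp_iff] at h
  obtain ⟨-, -, -, h3, -, h5⟩ := h
  have a3 : a ^ 3 = 1 := by simpa [hA] using h3
  have a5 : a ^ 5 = 1 := by simpa [hA] using h5
  linear_combination (a ^ 3 + 1) * a3 - a * a5

end Translations

section Counting

variable {k : Type*} [Field k] [IsSepClosed k]

lemma natCard_isRoot_of_derivative_eq_C {p : k[X]} {c : k} (hc : c ≠ 0)
    (hp : derivative p = C c) : Nat.card {x // p.IsRoot x} = p.natDegree := by
  have hsep : p.Separable := separable_def' p |>.2 ⟨0, C c⁻¹, by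
    rw [hp, zero_mul, zero_add, ← C_mul, inv_mul_cancel₀ hc, C_1]⟩
  rw [← card_rootSet_eq_natDegree (K := k) hsep (IsSepClosed.splits_domain p hsep),
    ← Nat.card_eq_fintype_card]
  exact Nat.card_congr (Equiv.subtypeEquivRight fun x ↦ by simp [mem_rootSet, hsep.ne_zero])

variable [CharP k 2]

lemma natCard_sq_add_self_eq (c : k) : Nat.card {x : k // x ^ 2 + x = c} = 2 := by
  have hder : derivative (X ^ 2 + X - C c) = C (1 : k) := by
    simp only [derivative_sub, derivative_add, derivative_X_pow, derivative_X, derivative_C,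
      map_natCast, map_one]
    grind
  have hdeg : (X ^ 2 + X - C c).natDegree = 2 := by compute_degree!
  simpa only [IsRoot.def, eval_sub, eval_add, eval_pow, eval_X, eval_C, sub_eq_zero] using
    (natCard_isRoot_of_derivative_eq_C one_ne_zero hder).trans hdeg

lemma natCard_linearized_eq_zero (b : k) {c : k} (hc : c ≠ 0) :
    Nat.card {x : k // x ^ 16 + x ^ 8 + b * x ^ 2 + c * x = 0} = 16 := by
  have hder : derivative (X ^ 16 + X ^ 8 + C b * X ^ 2 + C c * X) = C c := by
    simp only [derivative_add, derivative_X_pow, derivative_C_mul, derivative_X, map_natCast]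
    grind
  have hdeg : (X ^ 16 + X ^ 8 + C b * X ^ 2 + C c * X).natDegree = 16 := by compute_degree!
  simpa only [IsRoot.def, eval_add, eval_mul, eval_pow, eval_X, eval_C] using
    (natCard_isRoot_of_derivative_eq_C hc hder).trans hdeg

end Counting

section CoordRing

variable {k : Type*} [Field k]

lemma monic_curvePolyA (A : k) : (curvePolyA A).Monic := by
  rw [curvePolyA]
  monicity!

lemma natDegree_curvePolyA (A : k) : (curvePolyA A).natDegree = 2 := by
  rw [curvePolyA]
  compute_degree!

/-- The basis `1, y` of the coordinate ring of `C_A` over `k[x]`. -/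
noncomputable def coordBasis (A : k) : Module.Basis (Fin 2) k[X] (CoordRing A) :=
  (AdjoinRoot.powerBasis' (monic_curvePolyA A)).basis.reindex
    (finCongr (natDegree_curvePolyA A))

lemma coordBasis_apply (A : k) (i : Fin 2) :
    coordBasis A i = AdjoinRoot.root (curvePolyA A) ^ (i : ℕ) := by
  rw [coordBasis, Module.Basis.reindex_apply, PowerBasis.basis_eq_pow]
  rfl

lemma coordBasis_one (A : k) : coordBasis A 1 = AdjoinRoot.root (curvePolyA A) := by
  simp [coordBasis_apply]

lemma eval₂_curvePolyA {S : Type*} [CommRing S] (A : k) (φ : k[X] →+* S) (z : S) :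
    eval₂ φ z (curvePolyA A) = z ^ 2 + z - φ (curveRHS A) := by
  rw [curvePolyA, eval₂_sub, eval₂_add, eval₂_pow, eval₂_X, eval₂_C, curveRHS]

lemma root_sq_add_root (A : k) :
    AdjoinRoot.root (curvePolyA A) ^ 2 + AdjoinRoot.root (curvePolyA A) =
      AdjoinRoot.of (curvePolyA A) (curveRHS A) :=
  sub_eq_zero.1 <| (eval₂_curvePolyA A _ _).symm.trans (AdjoinRoot.eval₂_root _)

lemma isHyperellipticBasis_coordBasis {A : k} (hA : A ≠ 0) :
    IsHyperellipticBasis (coordBasis A) 1 (curveRHS A) 2 where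
  zero := by simp [coordBasis_apply]
  sq_add := by
    rw [coordBasis_one, map_one, one_mul, AdjoinRoot.algebraMap_eq, root_sq_add_root]
  natDegree_le := by simp
  natDegree_eq := natDegree_curveRHS hA

lemma coordRing_algEquiv_ext {A : k} {σ τ : CoordRing A ≃ₐ[k] CoordRing A}
    (hx : σ (AdjoinRoot.of _ X) = τ (AdjoinRoot.of _ X))
    (hy : σ (AdjoinRoot.root _) = τ (AdjoinRoot.root _)) : σ = τ :=
  AlgEquiv.coe_toAlgHom_injective <|
    AdjoinRoot.algHom_ext' (Polynomial.algHom_ext hx) hy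

variable [CharP k 2]

theorem exists_isTranslation_of_algEquiv {A : k} (hA : A ≠ 0)
    (σ : CoordRing A ≃ₐ[k] CoordRing A) :
    ∃ (t : k) (r : k[X]), r.natDegree ≤ 2 ∧ IsTranslation (curveRHS A) t r ∧
      σ (AdjoinRoot.of _ X) = AdjoinRoot.of _ (X + C t) ∧
      σ (AdjoinRoot.root _) = AdjoinRoot.root _ + AdjoinRoot.of _ r := by
  have hb := isHyperellipticBasis_coordBasis hA
  obtain ⟨l, hl, hx⟩ := hb.exists_algEquiv_apply_X one_le_two σ
  obtain ⟨r, s, hr, hs, hy⟩ := hb.exists_algEquiv_apply_y σ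
  obtain ⟨one_eq, comp_eq⟩ := hb.comp_eq_of_algEquiv σ hs hx hy
  obtain ⟨a, t, rfl⟩ := exists_eq_X_add_C_of_natDegree_le_one hl.le
  have hs1 : C s = 1 := by simpa [CharTwo.two_eq_zero] using one_eq.symm
  rw [hs1, one_comp, one_pow, one_mul, one_mul, add_right_comm] at comp_eq
  obtain rfl := eq_one_of_sq_add_self_add_curveRHS_eq_comp hA hr comp_eq.symm
  rw [map_one, one_mul] at hx comp_eq
  refine ⟨t, r, hr, comp_eq.symm, hx, ?_⟩
  rwa [coordBasis_one, hs1, map_one, one_mul, add_comm] at hy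

lemma root_add_of_sq_add_self {A t : k} {r : k[X]} (h : IsTranslation (curveRHS A) t r) :
    (AdjoinRoot.root (curvePolyA A) + AdjoinRoot.of _ r) ^ 2 +
        (AdjoinRoot.root (curvePolyA A) + AdjoinRoot.of _ r) =
      AdjoinRoot.of _ (taylor t (curveRHS A)) := by
  have two_eq_zero : (2 : CoordRing A) = 0 := by
    rw [← map_ofNat (AdjoinRoot.of (curvePolyA A)) 2, CharTwo.two_eq_zero, map_zero]
  rw [← h, map_add, map_add, map_pow]
  linear_combination root_sq_add_root A +
    AdjoinRoot.root (curvePolyA A) * AdjoinRoot.of _ r * two_eq_zero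

/-- The endomorphism `(x, y) ↦ (x + t, y + r(x))` of the coordinate ring of `C_A`. -/
noncomputable def translationHom {A t : k} {r : k[X]} (h : IsTranslation (curveRHS A) t r) :
    CoordRing A →ₐ[k] CoordRing A :=
  AdjoinRoot.liftAlgHom (curvePolyA A)
    ((AdjoinRoot.ofAlgHom k (curvePolyA A)).comp (taylorAlgHom t))
    (AdjoinRoot.root (curvePolyA A) + AdjoinRoot.of (curvePolyA A) r)
    ((eval₂_curvePolyA A _ _).trans (sub_eq_zero.2 (root_add_of_sq_add_self h)))

lemma translationHom_of {A t : k} {r : k[X]} (h : IsTranslation (curveRHS A) t r) (p : k[X]) :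
    translationHom h (AdjoinRoot.of _ p) = AdjoinRoot.of _ (taylor t p) :=
  AdjoinRoot.liftAlgHom_of ..

lemma translationHom_root {A t : k} {r : k[X]} (h : IsTranslation (curveRHS A) t r) :
    translationHom h (AdjoinRoot.root _) = AdjoinRoot.root _ + AdjoinRoot.of _ r :=
  AdjoinRoot.liftAlgHom_root ..

lemma translationHom_comp_translationHom {A t : k} {r r' : k[X]}
    (h : IsTranslation (curveRHS A) t r) (h' : IsTranslation (curveRHS A) t r')
    (hr : taylor t r' = r) :
    (translationHom h).comp (translationHom h') = AlgHom.id k (CoordRing A) := by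
  refine AdjoinRoot.algHom_ext' (AlgHom.ext fun p ↦ ?_) ?_
  · change translationHom h (translationHom h' (AdjoinRoot.of _ p)) = AdjoinRoot.of _ p
    rw [translationHom_of, translationHom_of, taylor_taylor_self]
  · rw [AlgHom.comp_apply, AlgHom.id_apply, translationHom_root, map_add, translationHom_root,
      translationHom_of, hr, add_assoc, ← map_add, CharTwo.add_self_eq_zero, map_zero, add_zero]

/-- The automorphism `(x, y) ↦ (x + t, y + r(x))` of the coordinate ring of `C_A`. -/
noncomputable def translationEquiv {A t : k} {r : k[X]} (h : IsTranslation (curveRHS A) t r) :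
    CoordRing A ≃ₐ[k] CoordRing A :=
  AlgEquiv.ofAlgHom (translationHom h) (translationHom h.inverse)
    (translationHom_comp_translationHom h h.inverse (taylor_taylor_self t r))
    (translationHom_comp_translationHom h.inverse h rfl)

lemma translationEquiv_X {A t : k} {r : k[X]} (h : IsTranslation (curveRHS A) t r) :
    translationEquiv h (AdjoinRoot.of _ X) = AdjoinRoot.of _ (X + C t) :=
  (translationHom_of h X).trans (by rw [taylor_X])

lemma translationEquiv_root {A t : k} {r : k[X]} (h : IsTranslation (curveRHS A) t r) :
    translationEquiv h (AdjoinRoot.root _) = AdjoinRoot.root _ + AdjoinRoot.of _ r :=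
  translationHom_root h

end CoordRing

section Automorphisms

variable {k : Type*} [Field k]

lemma of_quadratic (A u v w : k) :
    AdjoinRoot.of (curvePolyA A) (C w * X ^ 2 + C v * X + C u) =
      algebraMap k (CoordRing A) w * AdjoinRoot.of _ X ^ 2 +
        algebraMap k (CoordRing A) v * AdjoinRoot.of _ X + algebraMap k (CoordRing A) u := by
  simp only [map_add, map_mul, map_pow]
  rfl

variable [CharP k 2]

theorem exists_params_of_algEquiv {A : k} (hA : A ≠ 0) (σ : CoordRing A ≃ₐ[k] CoordRing A) :
    ∃ t f0 f1 f2 : k,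
      t ^ 16 + t ^ 8 + A⁻¹ ^ 2 * t ^ 2 + A⁻¹ ^ 3 * t = 0 ∧
      f1 = A * t ^ 4 + A * t ^ 2 ∧
      f2 = A ^ 2 * t ^ 8 + A ^ 2 * t ^ 4 + A * t ∧
      f0 ^ 2 + f0 = A * t ^ 5 + A * t ^ 3 ∧
      σ (AdjoinRoot.of _ X) = AdjoinRoot.of _ (X + C t) ∧
      σ (AdjoinRoot.root _) =
        AdjoinRoot.root _ + AdjoinRoot.of _ (C f2 * X ^ 2 + C f1 * X + C f0) := by
  obtain ⟨t, r, hr, h, hx, hy⟩ := exists_isTranslation_of_algEquiv hA σ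
  rw [eq_quadratic_of_natDegree_le_two hr] at h hy
  obtain ⟨ht, h1, h2, h0⟩ := (isTranslation_curveRHS_iff hA).1 h
  exact ⟨t, _, _, _, ht, h1, h2, h0, hx, hy⟩

/-- The automorphism of `C_A` with parameters `(t, f₀)`; the other two are determined by `t`. -/
noncomputable def algEquivOfParams {A : k} (hA : A ≠ 0)
    (p : Σ t : {t : k // t ^ 16 + t ^ 8 + A⁻¹ ^ 2 * t ^ 2 + A⁻¹ ^ 3 * t = 0},
      {u : k // u ^ 2 + u = A * t ^ 5 + A * t ^ 3}) :
    CoordRing A ≃ₐ[k] CoordRing A :=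
  translationEquiv ((isTranslation_curveRHS_iff hA).2 ⟨p.1.2, rfl, rfl, p.2.2⟩)

lemma algEquivOfParams_injective {A : k} (hA : A ≠ 0) :
    Function.Injective (algEquivOfParams hA) := by
  rintro ⟨⟨t, ht⟩, ⟨u, hu⟩⟩ ⟨⟨t', ht'⟩, ⟨u', hu'⟩⟩ h
  have of_injective : Function.Injective (AdjoinRoot.of (curvePolyA A)) :=
    AdjoinRoot.of.injective_of_degree_ne_zero fun hdeg ↦ by
      simpa [natDegree_curvePolyA] using natDegree_eq_of_degree_eq_some hdeg
  have hx := DFunLike.congr_fun h (AdjoinRoot.of _ X)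
  have hy := DFunLike.congr_fun h (AdjoinRoot.root _)
  simp only [algEquivOfParams, translationEquiv_X, translationEquiv_root, of_injective.eq_iff,
    add_right_inj, C_inj] at hx hy
  subst hx
  obtain rfl : u = u' := by simpa only [add_right_inj, C_inj] using hy
  rfl

lemma algEquivOfParams_surjective {A : k} (hA : A ≠ 0) :
    Function.Surjective (algEquivOfParams hA) := by
  intro σ
  obtain ⟨t, u, _, _, ht, rfl, rfl, hu, hx, hy⟩ := exists_params_of_algEquiv hA σ
  exact ⟨⟨⟨t, ht⟩, ⟨u, hu⟩⟩, coordRing_algEquiv_ext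
    ((translationEquiv_X _).trans hx.symm) ((translationEquiv_root _).trans hy.symm)⟩

theorem natCard_coordRing_algEquiv [IsSepClosed k] {A : k} (hA : A ≠ 0) :
    Nat.card (CoordRing A ≃ₐ[k] CoordRing A) = 32 := by
  have card_t := natCard_linearized_eq_zero (A⁻¹ ^ 2) (pow_ne_zero 3 (inv_ne_zero hA))
  have := Nat.finite_of_card_ne_zero (card_t.trans_ne (by decide))
  have (c : k) := Nat.finite_of_card_ne_zero ((natCard_sq_add_self_eq c).trans_ne two_ne_zero)
  have := Fintype.ofFinite {t : k // t ^ 16 + t ^ 8 + A⁻¹ ^ 2 * t ^ 2 + A⁻¹ ^ 3 * t = 0}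
  rw [← Nat.card_eq_of_bijective _
    ⟨algEquivOfParams_injective hA, algEquivOfParams_surjective hA⟩, Nat.card_sigma]
  simp only [natCard_sq_add_self_eq]
  rw [Finset.sum_const, Finset.card_univ, ← Nat.card_eq_fintype_card, card_t]
  rfl

end Automorphisms

theorem stmt_1_general (k : Type*) [Field k] [IsSepClosed k] [CharP k 2] (A : k) (hA : A ≠ 0) :
    let xx : CoordRing A := AdjoinRoot.of _ X
    let yy : CoordRing A := AdjoinRoot.root _
    (∀ σ : CoordRing A ≃ₐ[k] CoordRing A, ∃ t f0 f1 f2 : k,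
        t ^ 16 + t ^ 8 + A⁻¹ ^ 2 * t ^ 2 + A⁻¹ ^ 3 * t = 0 ∧
        f1 = A * t ^ 4 + A * t ^ 2 ∧
        f2 = A ^ 2 * t ^ 8 + A ^ 2 * t ^ 4 + A * t ∧
        f0 ^ 2 + f0 = A * t ^ 5 + A * t ^ 3 ∧
        σ xx = xx + algebraMap k _ t ∧
        σ yy = yy + algebraMap k _ f2 * xx ^ 2 + algebraMap k _ f1 * xx
          + algebraMap k _ f0) ∧
    (∀ t f0 f1 f2 : k,
        t ^ 16 + t ^ 8 + A⁻¹ ^ 2 * t ^ 2 + A⁻¹ ^ 3 * t = 0 →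
        f1 = A * t ^ 4 + A * t ^ 2 →
        f2 = A ^ 2 * t ^ 8 + A ^ 2 * t ^ 4 + A * t →
        f0 ^ 2 + f0 = A * t ^ 5 + A * t ^ 3 →
        ∃ σ : CoordRing A ≃ₐ[k] CoordRing A,
          σ xx = xx + algebraMap k _ t ∧
          σ yy = yy + algebraMap k _ f2 * xx ^ 2 + algebraMap k _ f1 * xx
            + algebraMap k _ f0) ∧
    Nat.card (CoordRing A ≃ₐ[k] CoordRing A) = 32 := by
  intro xx yy
  refine ⟨fun σ ↦ ?_, fun t f0 f1 f2 ht h1 h2 h0 ↦ ?_, natCard_coordRing_algEquiv hA⟩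
  · obtain ⟨t, f0, f1, f2, ht, h1, h2, h0, hx, hy⟩ := exists_params_of_algEquiv hA σ
    rw [map_add] at hx
    rw [of_quadratic, ← add_assoc, ← add_assoc] at hy
    exact ⟨t, f0, f1, f2, ht, h1, h2, h0, hx, hy⟩
  · have h := (isTranslation_curveRHS_iff hA).2 ⟨ht, h1, h2, h0⟩
    refine ⟨translationEquiv h, (translationEquiv_X h).trans (map_add _ _ _), ?_⟩
    rw [translationEquiv_root, of_quadratic, ← add_assoc, ← add_assoc]

/-- Every automorphism of `C_A : y² + y = Ax⁵ + Ax³` (equivalently, every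
`k`-algebra automorphism of its coordinate ring, since the unique point at infinity
is fixed by every automorphism) has the form
`(x,y) ↦ (x + t, y + f₂x² + f₁x + f₀)` with
`t¹⁶ + t⁸ + A⁻²t² + A⁻³t = 0`, `f₁ = At⁴ + At²`, `f₂ = A²t⁸ + A²t⁴ + At`,
`f₀² + f₀ = At⁵ + At³`; conversely every such choice gives an automorphism;
and the automorphism group has order 32. -/
theorem stmt_1 (k : Type*) [Field k] [IsAlgClosed k] [CharP k 2] (A : k) (hA : A ≠ 0) :
    let xx : CoordRing A := AdjoinRoot.of _ X
    let yy : CoordRing A := AdjoinRoot.root _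
    (∀ σ : CoordRing A ≃ₐ[k] CoordRing A, ∃ t f0 f1 f2 : k,
        t ^ 16 + t ^ 8 + A⁻¹ ^ 2 * t ^ 2 + A⁻¹ ^ 3 * t = 0 ∧
        f1 = A * t ^ 4 + A * t ^ 2 ∧
        f2 = A ^ 2 * t ^ 8 + A ^ 2 * t ^ 4 + A * t ∧
        f0 ^ 2 + f0 = A * t ^ 5 + A * t ^ 3 ∧
        σ xx = xx + algebraMap k _ t ∧
        σ yy = yy + algebraMap k _ f2 * xx ^ 2 + algebraMap k _ f1 * xx
          + algebraMap k _ f0) ∧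
    (∀ t f0 f1 f2 : k,
        t ^ 16 + t ^ 8 + A⁻¹ ^ 2 * t ^ 2 + A⁻¹ ^ 3 * t = 0 →
        f1 = A * t ^ 4 + A * t ^ 2 →
        f2 = A ^ 2 * t ^ 8 + A ^ 2 * t ^ 4 + A * t →
        f0 ^ 2 + f0 = A * t ^ 5 + A * t ^ 3 →
        ∃ σ : CoordRing A ≃ₐ[k] CoordRing A,
          σ xx = xx + algebraMap k _ t ∧
          σ yy = yy + algebraMap k _ f2 * xx ^ 2 + algebraMap k _ f1 * xx
            + algebraMap k _ f0) ∧
    Nat.card (CoordRing A ≃ₐ[k] CoordRing A) = 32 :=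
  stmt_1_general k A hA

end Stmt1
end

section
/- Let k be an algebraically closed field of characteristic 2, let A be nonzero in k, let C_A be the curve y^2 + y = A x^5 + A x^3, and let α: (x,y) ↦ (x + t, y + f_2 x^2 + f_1 x + f_0) be an automorphism of C_A with t ≠ 0, f_1 = A t^4 + A t^2, f_2 = A^2 t^8 + A^2 t^4 + A t. Then α^2 is the map (x,y) ↦ (x, y + A t^5 (A t^5 + A t + 1)). Consequently α has order 2 if t^5 + t + A^{-1} = 0, and α has order 4 with α^2 equal to the hyperelliptic involution if t^{10} + t^6 + A^{-1} t^5 + A^{-2} = 0. -/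
open Polynomial

namespace Stmt4

/-- The defining polynomial `Y² + Y - (Ax⁵ + Ax³)` of the affine model of
`C_A : y² + y = Ax⁵ + Ax³`. -/
noncomputable def curvePolyA {k : Type*} [Field k] (A : k) : Polynomial (k[X]) :=
  X ^ 2 + X - C (C A * X ^ 5 + C A * X ^ 3)

/-- The affine coordinate ring of `C_A`. -/
noncomputable abbrev CoordRing {k : Type*} [Field k] (A : k) : Type _ :=
  AdjoinRoot (curvePolyA A)

/-!
If `α : (x, y) ↦ (x + t, y + f(x))` in characteristic two, then `α²` fixes `x` and sends `y` to
`y + f(x) + f(x + t)`. For quadratic `f = f₂X² + f₁X + f₀` the increment `f(x) + f(x + t)` is the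
constant `c = f₂t² + f₁t`. The coordinates generate the coordinate ring, so `α² = 1` when `c = 0`,
while for `c ≠ 0` the map `y ↦ y + c` is an involution and `α` has order four. The two polynomial
conditions on `t` come from `c = A²t⁵(t⁵ + t + A⁻¹)` and `c + 1 = A²(t¹⁰ + t⁶ + A⁻¹t⁵ + A⁻²)`.
-/

theorem orderOf_eq_sq_of_orderOf_pow_eq_self {G : Type*} [Monoid G] {g : G} {p : ℕ}
    [Fact p.Prime] (hg : orderOf (g ^ p) = p) : orderOf g = p ^ 2 := by
  obtain ⟨hpow, hne⟩ := orderOf_eq_prime_iff.mp hg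
  refine orderOf_eq_prime_pow (n := 1) (by rwa [pow_one]) ?_
  rwa [sq, pow_mul]

section Generators

variable {R S : Type*} [CommSemiring R] [Semiring S] [Algebra R S] {s : Set S}

theorem algEquiv_ext_of_adjoin_eq_top {T : Type*} [Semiring T] [Algebra R T]
    (hs : Algebra.adjoin R s = ⊤) {φ ψ : S ≃ₐ[R] T} (h : s.EqOn φ ψ) : φ = ψ :=
  AlgEquiv.coe_toAlgHom_injective (AlgHom.ext_of_adjoin_eq_top hs h)

theorem orderOf_eq_two_of_apply_apply_eq_self (hs : Algebra.adjoin R s = ⊤)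
    {σ : S ≃ₐ[R] S} (hσ : σ ≠ 1) (h : ∀ z ∈ s, σ (σ z) = z) : orderOf σ = 2 :=
  orderOf_eq_prime (algEquiv_ext_of_adjoin_eq_top hs h) hσ

end Generators

section CharTwo

variable {R S : Type*} [CommSemiring R] [CommRing S] [Algebra R S] [CharP S 2] {x y : S}

theorem apply_apply_of_apply_eq_add_algebraMap (σ : S →ₐ[R] S) {t : R}
    (hx : σ x = x + algebraMap R S t) : σ (σ x) = x := by
  rw [hx, map_add, hx, AlgHom.commutes, CharTwo.add_cancel_right]

theorem apply_apply_of_apply_eq_add_quadratic (σ : S →ₐ[R] S) {t a b c : R}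
    (hx : σ x = x + algebraMap R S t)
    (hy : σ y = y + algebraMap R S a * x ^ 2 + algebraMap R S b * x + algebraMap R S c) :
    σ (σ y) = y + algebraMap R S (a * t ^ 2 + b * t) := by
  rw [hy]
  simp only [map_add, map_mul, map_pow, AlgHom.commutes, hx, hy]
  linear_combination (algebraMap R S a * (x ^ 2 + x * algebraMap R S t) + algebraMap R S b * x
    + algebraMap R S c) * CharTwo.two_eq_zero (R := S)

theorem orderOf_eq_two_of_apply_eq_add_algebraMap (hxy : Algebra.adjoin R {x, y} = ⊤)
    {τ : S ≃ₐ[R] S} {c : R} (hc : algebraMap R S c ≠ 0) (hx : τ x = x)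
    (hy : τ y = y + algebraMap R S c) : orderOf τ = 2 := by
  have hτ : τ ≠ 1 := by
    rintro rfl
    exact hc (left_eq_add.mp hy)
  have hyy : τ (τ y) = y := apply_apply_of_apply_eq_add_algebraMap τ.toAlgHom hy
  exact orderOf_eq_two_of_apply_apply_eq_self hxy hτ (by simp [hx, hyy])

end CharTwo

theorem adjoin_of_X_root_eq_top {R : Type*} [CommRing R] (f : R[X][X]) :
    Algebra.adjoin R {AdjoinRoot.of f X, AdjoinRoot.root f} = ⊤ := by
  have h := Algebra.adjoin_eq_adjoin_union R {(X : R[X])} {AdjoinRoot.root f} Polynomial.adjoin_X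
  rw [AdjoinRoot.adjoinRoot_eq_top, Subalgebra.restrictScalars_top, Set.image_singleton] at h
  exact h.symm

section Curve

variable {k : Type*} [Field k] {A t : k}

theorem degree_curvePolyA (A : k) : (curvePolyA A).degree = 2 := by
  unfold curvePolyA
  compute_degree!

instance : Nontrivial (CoordRing A) :=
  AdjoinRoot.nontrivial _ (by rw [degree_curvePolyA]; exact two_ne_zero)

instance [CharP k 2] : CharP (CoordRing A) 2 :=
  charP_of_injective_algebraMap (algebraMap k (CoordRing A)).injective 2

/-- The constant `c` for which the square of `(x, y) ↦ (x + t, y + f₂x² + f₁x + f₀)` is the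
translation `(x, y) ↦ (x, y + c)` of `C_A`. -/
def squareShift (A t : k) : k :=
  A * t ^ 5 * (A * t ^ 5 + A * t + 1)

theorem squareShift_eq_quadratic_increment [CharP k 2] (A t : k) :
    squareShift A t =
      (A ^ 2 * t ^ 8 + A ^ 2 * t ^ 4 + A * t) * t ^ 2 + (A * t ^ 4 + A * t ^ 2) * t := by
  unfold squareShift
  linear_combination -(A * t ^ 3) * CharTwo.two_eq_zero (R := k)

theorem squareShift_eq_zero_iff (hA : A ≠ 0) (ht : t ≠ 0) :
    squareShift A t = 0 ↔ t ^ 5 + t + A⁻¹ = 0 := by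
  have hfactor : squareShift A t = A ^ 2 * t ^ 5 * (t ^ 5 + t + A⁻¹) := by
    unfold squareShift
    field_simp
  simp [hfactor, hA, ht]

theorem squareShift_eq_one_iff [CharP k 2] (hA : A ≠ 0) :
    squareShift A t = 1 ↔ t ^ 10 + t ^ 6 + A⁻¹ * t ^ 5 + A⁻¹ ^ 2 = 0 := by
  have hfactor : squareShift A t + 1 =
      A ^ 2 * (t ^ 10 + t ^ 6 + A⁻¹ * t ^ 5 + A⁻¹ ^ 2) := by
    unfold squareShift
    field_simp
  rw [← CharTwo.add_eq_zero, hfactor, mul_eq_zero_iff_left (pow_ne_zero 2 hA)]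

end Curve

theorem stmt_4_general (k : Type*) [Field k] [CharP k 2] (A : k) (hA : A ≠ 0)
    (t f0 f1 f2 : k) (ht : t ≠ 0)
    (hf1 : f1 = A * t ^ 4 + A * t ^ 2)
    (hf2 : f2 = A ^ 2 * t ^ 8 + A ^ 2 * t ^ 4 + A * t)
    (σ : CoordRing A ≃ₐ[k] CoordRing A)
    (hσx : σ (AdjoinRoot.of _ X) = AdjoinRoot.of _ X + algebraMap k _ t)
    (hσy : σ (AdjoinRoot.root _) = AdjoinRoot.root _
        + algebraMap k _ f2 * (AdjoinRoot.of _ X) ^ 2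
        + algebraMap k _ f1 * (AdjoinRoot.of _ X) + algebraMap k _ f0) :
    ((σ * σ) (AdjoinRoot.of _ X) = AdjoinRoot.of _ X ∧
      (σ * σ) (AdjoinRoot.root _) = AdjoinRoot.root _
        + algebraMap k _ (A * t ^ 5 * (A * t ^ 5 + A * t + 1))) ∧
    (t ^ 5 + t + A⁻¹ = 0 → orderOf σ = 2) ∧
    (t ^ 10 + t ^ 6 + A⁻¹ * t ^ 5 + A⁻¹ ^ 2 = 0 →
      orderOf σ = 4 ∧
      (σ * σ) (AdjoinRoot.root _) = AdjoinRoot.root _ + 1) := by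
  have hxy := adjoin_of_X_root_eq_top (curvePolyA A)
  have hx : σ (σ (AdjoinRoot.of _ X)) = AdjoinRoot.of _ X :=
    apply_apply_of_apply_eq_add_algebraMap σ.toAlgHom hσx
  have hy : σ (σ (AdjoinRoot.root _)) = AdjoinRoot.root _ + algebraMap k _ (squareShift A t) := by
    rw [squareShift_eq_quadratic_increment, ← hf1, ← hf2]
    exact apply_apply_of_apply_eq_add_quadratic σ.toAlgHom hσx hσy
  refine ⟨⟨hx, hy⟩, fun h ↦ ?_, fun h ↦ ?_⟩
  · have hσ : σ ≠ 1 := by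
      rintro rfl
      exact ht ((map_eq_zero _).mp (left_eq_add.mp hσx))
    rw [(squareShift_eq_zero_iff hA ht).mpr h, map_zero, add_zero] at hy
    exact orderOf_eq_two_of_apply_apply_eq_self hxy hσ (by simp [hx, hy])
  · rw [(squareShift_eq_one_iff hA).mpr h] at hy
    have hσ_sq : orderOf (σ ^ 2) = 2 :=
      orderOf_eq_two_of_apply_eq_add_algebraMap hxy (by simp) hx hy
    exact ⟨orderOf_eq_sq_of_orderOf_pow_eq_self hσ_sq, by rwa [map_one] at hy⟩

/-- Let `α : (x,y) ↦ (x + t, y + f₂x² + f₁x + f₀)` be an automorphism of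
`C_A : y² + y = Ax⁵ + Ax³` with `t ≠ 0`, `f₁ = At⁴ + At²`, `f₂ = A²t⁸ + A²t⁴ + At`.
Then `α² : (x,y) ↦ (x, y + At⁵(At⁵ + At + 1))`; consequently `α` has order 2 if
`t⁵ + t + A⁻¹ = 0`, and order 4 with `α²` the hyperelliptic involution
`(x,y) ↦ (x, y + 1)` if `t¹⁰ + t⁶ + A⁻¹t⁵ + A⁻² = 0`. -/
theorem stmt_4 (k : Type*) [Field k] [IsAlgClosed k] [CharP k 2] (A : k) (hA : A ≠ 0)
    (t f0 f1 f2 : k) (ht : t ≠ 0)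
    (hf1 : f1 = A * t ^ 4 + A * t ^ 2)
    (hf2 : f2 = A ^ 2 * t ^ 8 + A ^ 2 * t ^ 4 + A * t)
    (σ : CoordRing A ≃ₐ[k] CoordRing A)
    (hσx : σ (AdjoinRoot.of _ X) = AdjoinRoot.of _ X + algebraMap k _ t)
    (hσy : σ (AdjoinRoot.root _) = AdjoinRoot.root _
        + algebraMap k _ f2 * (AdjoinRoot.of _ X) ^ 2
        + algebraMap k _ f1 * (AdjoinRoot.of _ X) + algebraMap k _ f0) :
    ((σ * σ) (AdjoinRoot.of _ X) = AdjoinRoot.of _ X ∧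
      (σ * σ) (AdjoinRoot.root _) = AdjoinRoot.root _
        + algebraMap k _ (A * t ^ 5 * (A * t ^ 5 + A * t + 1))) ∧
    (t ^ 5 + t + A⁻¹ = 0 → orderOf σ = 2) ∧
    (t ^ 10 + t ^ 6 + A⁻¹ * t ^ 5 + A⁻¹ ^ 2 = 0 →
      orderOf σ = 4 ∧
      (σ * σ) (AdjoinRoot.root _) = AdjoinRoot.root _ + 1) := by
  exact stmt_4_general k A hA t f0 f1 f2 ht hf1 hf2 σ hσx hσy

end Stmt4
end

section
/- Let O be the maximal order in the quaternion algebra H = Q⟨i,j⟩ (i^2 = j^2 = −1, ij = −ji) containing i, j, and (1+i+j+ij)/2, and let M = [[2, 1+i],[1−i, 2]] ∈ M_2(O). Then the number of invertible matrices A ∈ M_2(O) satisfying A* M A = M, where A* is the conjugate-transpose of A, equals 1920. -/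
open Quaternion

namespace Stmt9

/-- The quaternion `i` in `ℍ[ℚ]`. -/
def qi : ℍ[ℚ] := ⟨0, 1, 0, 0⟩

/-- The quaternion `j` in `ℍ[ℚ]`. -/
def qj : ℍ[ℚ] := ⟨0, 0, 1, 0⟩

/-- The maximal order `O ⊂ H` containing `i`, `j` and `(1+i+j+ij)/2`
(the Hurwitz order). -/
noncomputable def O : Subring ℍ[ℚ] :=
  Subring.closure {qi, qj, (1 + qi + qj + qi * qj) / 2}

/-- The matrix `M = [[2, 1+i], [1-i, 2]]`. -/
noncomputable def M : Matrix (Fin 2) (Fin 2) ℍ[ℚ] := !![2, 1 + qi; 1 - qi, 2]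

/-!
Put `ϖ = 1 - i`. Since `M = C* C` with `C = !![ϖ, 1; 0, 1]`, the vector `v ∈ O²` has
`v* M v = N(ϖ v₀ + v₁) + N(v₁)`, so that the isometry group of `M` is that of the lattice of all
`(x, y) ∈ O²` with `x ≡ y` modulo `ϖ`, with the form `N(x) + N(y)`. The orbit of the first basis
vector consists of the vectors of norm `2`, namely `(ϖa, 0)` and `(0, -ϖa)` for the `24` units `a`,
and `(u, eu)` for units `u` and `e` with `e ≡ 1` modulo `ϖ`; there are `8` such `e`. The stabilizer
consists of the isometries that are `diag(1, e)` in the coordinates `(x, y)`. By the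
orbit-stabilizer theorem the group has order `(24 + 24 + 24 * 8) * 8 = 1920`.
-/

section IsometryGroup

variable {R n : Type*} [Ring R] [StarRing R] [Fintype n] [DecidableEq n]

/-- The group of all `A ∈ GLₙ(S)` with `A* H A = H`, for a subring `S` of `R` and a matrix `H`
over `R`; it is realised inside `GLₙ(R)` so that it acts on `Rⁿ`. -/
def isometryGroup (S : Subring R) (H : Matrix n n R) : Subgroup (Matrix n n R)ˣ where
  carrier := {A | A ∈ S.matrix.toSubmonoid.units ∧ A.val.conjTranspose * H * A.val = H}
  mul_mem' := by
    rintro A B ⟨hA, hAH⟩ ⟨hB, hBH⟩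
    refine ⟨mul_mem hA hB, ?_⟩
    calc (A * B).val.conjTranspose * H * (A * B).val
        = B.val.conjTranspose * (A.val.conjTranspose * H * A.val) * B.val := by
          simp only [Units.val_mul, Matrix.conjTranspose_mul, Matrix.mul_assoc]
      _ = H := by rw [hAH, hBH]
  one_mem' := ⟨one_mem _, by simp⟩
  inv_mem' := by
    rintro A ⟨hA, hAH⟩
    refine ⟨inv_mem hA, ?_⟩
    calc A⁻¹.val.conjTranspose * H * A⁻¹.val
        = (A.val * A⁻¹.val).conjTranspose * H * (A.val * A⁻¹.val) := by
          conv_lhs => rw [← hAH]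
          simp only [Matrix.conjTranspose_mul, Matrix.mul_assoc]
      _ = H := by simp

theorem card_subtype_isometry_eq_card_isometryGroup (S : Subring R) (H : Matrix n n R) :
    Nat.card {A : Matrix n n R // (∀ i j, A i j ∈ S) ∧
      (∃ B : Matrix n n R, (∀ i j, B i j ∈ S) ∧ A * B = 1 ∧ B * A = 1) ∧
      A.conjTranspose * H * A = H} = Nat.card (isometryGroup S H) := by
  symm
  refine Nat.card_eq_of_bijective
    (fun A => ⟨A.1.val, A.2.1.1, ⟨A.1⁻¹.val, A.2.1.2, A.1.mul_inv, A.1.inv_mul⟩, A.2.2⟩) ⟨?_, ?_⟩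
  · intro A B hAB
    exact Subtype.ext (Units.ext (congrArg Subtype.val hAB))
  · rintro ⟨A, hA, ⟨B, hB, hAB, hBA⟩, hAH⟩
    exact ⟨⟨⟨A, B, hAB, hBA⟩, ⟨hA, hB⟩, hAH⟩, rfl⟩

end IsometryGroup

section HurwitzOrder

attribute [simps] qi qj

theorem qi_mul_self : qi * qi = -1 := by
  ext <;> simp

/-- The quaternion `xω + yi + zj + wk` with `ω = (1 + i + j + k) / 2`; such combinations with
integral coefficients make up the order `O`. -/
@[simps] def hurwitz (x y z w : ℤ) : ℍ[ℚ] := ⟨x / 2, x / 2 + y, x / 2 + z, x / 2 + w⟩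

theorem half_sum_eq_hurwitz : (1 + qi + qj + qi * qj) / 2 = hurwitz 1 0 0 0 := by
  have htwo : (2 : ℍ[ℚ]) ≠ 0 := by
    exact_mod_cast (Quaternion.coe_injective (R := ℚ)).ne two_ne_zero
  rw [div_eq_iff htwo, mul_two]
  ext <;> norm_num

theorem qi_mul_hurwitz (x y z w : ℤ) :
    qi * hurwitz x y z w = hurwitz (-x - 2 * y) (x + y) (y - w) (x + y + z) := by
  ext <;> simp <;> ring

theorem qj_mul_hurwitz (x y z w : ℤ) :
    qj * hurwitz x y z w = hurwitz (-x - 2 * z) (x + z + w) (x + z) (z - y) := by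
  ext <;> simp <;> ring

theorem hurwitz_one_mul_hurwitz (x y z w : ℤ) : hurwitz 1 0 0 0 * hurwitz x y z w =
    hurwitz (-x - y - z - w) (x + y + w) (x + y + z) (x + z + w) := by
  ext <;> simp <;> ring

theorem one_eq_hurwitz : (1 : ℍ[ℚ]) = hurwitz 2 (-1) (-1) (-1) := by
  ext <;> simp

/-- The lattice spanned by `ω, i, j, k`; being stable under left multiplication by `O` and
containing `1`, it contains `O`. -/
def hurwitzLattice : AddSubgroup ℍ[ℚ] where
  carrier := {q | ∃ x y z w : ℤ, q = hurwitz x y z w}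
  zero_mem' := ⟨0, 0, 0, 0, by ext <;> simp⟩
  add_mem' := by
    rintro _ _ ⟨x, y, z, w, rfl⟩ ⟨x', y', z', w', rfl⟩
    exact ⟨x + x', y + y', z + z', w + w', by ext <;> simp <;> ring⟩
  neg_mem' := by
    rintro _ ⟨x, y, z, w, rfl⟩
    exact ⟨-x, -y, -z, -w, by ext <;> simp <;> ring⟩

theorem mul_mem_hurwitzLattice {p q : ℍ[ℚ]} (hp : p ∈ O) (hq : q ∈ hurwitzLattice) :
    p * q ∈ hurwitzLattice := by
  induction hp using Subring.closure_induction generalizing q with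
  | mem p hp =>
    obtain ⟨x, y, z, w, rfl⟩ := hq
    rcases hp with rfl | rfl | rfl
    · exact ⟨_, _, _, _, qi_mul_hurwitz x y z w⟩
    · exact ⟨_, _, _, _, qj_mul_hurwitz x y z w⟩
    · exact half_sum_eq_hurwitz ▸ ⟨_, _, _, _, hurwitz_one_mul_hurwitz x y z w⟩
  | zero => simp
  | one => simpa
  | add p p' _ _ ih ih' => simpa only [add_mul] using add_mem (ih hq) (ih' hq)
  | neg p _ ih => simpa only [neg_mul] using neg_mem (ih hq)
  | mul p p' _ _ ih ih' => simpa only [mul_assoc] using ih (ih' hq)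

theorem qi_mem_O : qi ∈ O := Subring.subset_closure (by simp)

theorem hurwitz_mem_O (x y z w : ℤ) : hurwitz x y z w ∈ O := by
  have hj : qj ∈ O := Subring.subset_closure (by simp)
  have hω : hurwitz 1 0 0 0 ∈ O := half_sum_eq_hurwitz ▸ Subring.subset_closure (by simp)
  have hcomb : hurwitz x y z w =
      x • hurwitz 1 0 0 0 + y • qi + z • qj + w • (qi * qj) := by
    ext <;> simp <;> ring
  rw [hcomb]
  exact add_mem (add_mem (add_mem (zsmul_mem hω x) (zsmul_mem qi_mem_O y)) (zsmul_mem hj z))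
    (zsmul_mem (mul_mem qi_mem_O hj) w)

theorem mem_O_iff {q : ℍ[ℚ]} : q ∈ O ↔ ∃ x y z w : ℤ, q = hurwitz x y z w := by
  constructor
  · intro hq
    exact mul_one q ▸ mul_mem_hurwitzLattice hq ⟨_, _, _, _, one_eq_hurwitz⟩
  · rintro ⟨x, y, z, w, rfl⟩
    exact hurwitz_mem_O x y z w

theorem star_mem_O {q : ℍ[ℚ]} (hq : q ∈ O) : star q ∈ O := by
  obtain ⟨x, y, z, w, rfl⟩ := mem_O_iff.1 hq
  exact mem_O_iff.2 ⟨x, -x - y, -x - z, -x - w, by ext <;> simp <;> ring⟩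

/-- `hurwitz` on tuples of coordinates. -/
def hurwitzOfProd (p : ℤ × ℤ × ℤ × ℤ) : ℍ[ℚ] := hurwitz p.1 p.2.1 p.2.2.1 p.2.2.2

theorem hurwitzOfProd_injective : Function.Injective hurwitzOfProd := by
  rintro ⟨x, y, z, w⟩ ⟨x', y', z', w'⟩ h
  obtain ⟨hx, hy, hz, hw⟩ := Quaternion.ext_iff.1 h
  obtain rfl : x = x' := by simpa [hurwitzOfProd] using hx
  obtain rfl : y = y' := by simpa [hurwitzOfProd] using hy
  obtain rfl : z = z' := by simpa [hurwitzOfProd] using hz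
  obtain rfl : w = w' := by simpa [hurwitzOfProd] using hw
  rfl

theorem normSq_hurwitz (x y z w : ℤ) : normSq (hurwitz x y z w) =
    ((x ^ 2 + x * (y + z + w) + y ^ 2 + z ^ 2 + w ^ 2 : ℤ) : ℚ) := by
  simp only [normSq_def', re_hurwitz, imI_hurwitz, imJ_hurwitz, imK_hurwitz]
  push_cast
  ring

theorem exists_normSq_eq_natCast {q : ℍ[ℚ]} (hq : q ∈ O) : ∃ n : ℕ, normSq q = n := by
  obtain ⟨x, y, z, w, rfl⟩ := mem_O_iff.1 hq
  have hnonneg := normSq_nonneg (a := hurwitz x y z w)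
  rw [normSq_hurwitz] at hnonneg ⊢
  obtain ⟨n, hn⟩ := Int.eq_ofNat_of_zero_le (Int.cast_nonneg_iff.1 hnonneg)
  exact ⟨n, by rw [hn]; simp⟩

/-- The generator `1 - i` of the two-sided prime ideal of `O` above `2`. -/
def ϖ : ℍ[ℚ] := 1 - qi

theorem normSq_ϖ : normSq ϖ = 2 := by
  norm_num [normSq_def', ϖ]

theorem ϖ_ne_zero : ϖ ≠ 0 := by
  rw [← normSq_ne_zero, normSq_ϖ]
  norm_num

theorem ϖ_mem_O : ϖ ∈ O := sub_mem (one_mem O) qi_mem_O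

theorem ϖ_mul_hurwitz (x y s w : ℤ) :
    ϖ * hurwitz (-y) (x + y) (s - w) (x + s) = hurwitz (x + x) y (s + s - y - w) w := by
  ext <;> simp [ϖ] <;> ring

theorem even_and_even_of_even_hurwitz_form {x y z w : ℤ}
    (h : Even (x ^ 2 + x * (y + z + w) + y ^ 2 + z ^ 2 + w ^ 2)) :
    Even x ∧ Even (y + z + w) := by
  simp only [Int.even_add, Int.even_mul, Int.even_pow' two_ne_zero] at h ⊢
  tauto

theorem inv_ϖ_mul_mem_O_iff {q : ℍ[ℚ]} (hq : q ∈ O) :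
    ϖ⁻¹ * q ∈ O ↔ ∃ n : ℤ, normSq q = 2 * n := by
  constructor
  · intro h
    obtain ⟨n, hn⟩ := exists_normSq_eq_natCast h
    refine ⟨n, ?_⟩
    rw [← mul_inv_cancel_left₀ ϖ_ne_zero q, map_mul, normSq_ϖ, hn, Int.cast_natCast]
  · rintro ⟨n, hn⟩
    obtain ⟨x, y, z, w, rfl⟩ := mem_O_iff.1 hq
    rw [normSq_hurwitz] at hn
    have heven := even_iff_two_dvd.2 (⟨n, by exact_mod_cast hn⟩ : (2 : ℤ) ∣ _)
    obtain ⟨⟨x, rfl⟩, s, hs⟩ := even_and_even_of_even_hurwitz_form heven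
    obtain rfl : z = s + s - y - w := by linarith
    rw [← ϖ_mul_hurwitz, inv_mul_cancel_left₀ ϖ_ne_zero]
    exact hurwitz_mem_O _ _ _ _

end HurwitzOrder

section Units

/-- The group `O¹` of elements of `O` of norm one, as a set. -/
def unitsO : Set ℍ[ℚ] := {q | q ∈ O ∧ normSq q = 1}

/-- The elements of `O¹` that are congruent to `1` modulo `ϖ`. -/
def congruenceUnits : Set ℍ[ℚ] := {q ∈ unitsO | ϖ⁻¹ * (1 - q) ∈ O}

/-- The coordinates of the elements of `O¹` in the basis `ω, i, j, k`. -/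
noncomputable def unitCoordinates : Finset (ℤ × ℤ × ℤ × ℤ) :=
  {p ∈ Finset.Icc (-2, -2, -2, -2) (2, 2, 2, 2) |
    p.1 ^ 2 + p.1 * (p.2.1 + p.2.2.1 + p.2.2.2) + p.2.1 ^ 2 + p.2.2.1 ^ 2 + p.2.2.2 ^ 2 = 1}

theorem mem_unitCoordinates {x y z w : ℤ} : (x, y, z, w) ∈ unitCoordinates ↔
    x ^ 2 + x * (y + z + w) + y ^ 2 + z ^ 2 + w ^ 2 = 1 := by
  simp only [unitCoordinates, Finset.mem_filter, Finset.mem_Icc, Prod.mk_le_mk,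
    and_iff_right_iff_imp]
  intro h
  have hsum : x ^ 2 + (x + 2 * y) ^ 2 + (x + 2 * z) ^ 2 + (x + 2 * w) ^ 2 = 4 := by linarith
  have hbound : ∀ t : ℤ, t ^ 2 ≤ 4 → -2 ≤ t ∧ t ≤ 2 := fun t ht => by constructor <;> nlinarith
  have hx := hbound x (by nlinarith [hsum])
  have hy := hbound (x + 2 * y) (by nlinarith [hsum])
  have hz := hbound (x + 2 * z) (by nlinarith [hsum])
  have hw := hbound (x + 2 * w) (by nlinarith [hsum])
  lia

theorem hurwitz_mem_unitsO_iff {x y z w : ℤ} :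
    hurwitz x y z w ∈ unitsO ↔ (x, y, z, w) ∈ unitCoordinates := by
  rw [mem_unitCoordinates, unitsO, Set.mem_ofPred_eq, and_iff_right (hurwitz_mem_O x y z w),
    normSq_hurwitz]
  norm_cast

theorem normSq_one_sub {R : Type*} [CommRing R] {q : ℍ[R]} (hq : normSq q = 1) :
    normSq (1 - q) = 2 - 2 * q.re := by
  rw [sub_eq_add_neg, normSq_add, normSq_neg, hq, map_one, one_mul, star_neg, re_neg, re_star]
  ring

theorem inv_ϖ_mul_one_sub_hurwitz_mem_O_iff {x y z w : ℤ} (h : hurwitz x y z w ∈ unitsO) :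
    ϖ⁻¹ * (1 - hurwitz x y z w) ∈ O ↔ Even x := by
  have hnorm : normSq (1 - hurwitz x y z w) = ((2 - x : ℤ) : ℚ) := by
    rw [normSq_one_sub h.2, re_hurwitz]
    push_cast
    ring
  rw [inv_ϖ_mul_mem_O_iff (sub_mem (one_mem O) h.1), hnorm]
  constructor
  · rintro ⟨n, hn⟩
    have hx : 2 - x = 2 * n := by exact_mod_cast hn
    exact ⟨1 - n, by linarith⟩
  · rintro ⟨n, rfl⟩
    exact ⟨1 - n, by push_cast; ring⟩

theorem unitsO_eq_image_hurwitzOfProd : unitsO = hurwitzOfProd '' unitCoordinates := by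
  ext q
  constructor
  · intro hq
    obtain ⟨x, y, z, w, rfl⟩ := mem_O_iff.1 hq.1
    exact ⟨(x, y, z, w), hurwitz_mem_unitsO_iff.1 hq, rfl⟩
  · rintro ⟨p, hp, rfl⟩
    exact hurwitz_mem_unitsO_iff.2 hp

theorem congruenceUnits_eq_image_hurwitzOfProd :
    congruenceUnits = hurwitzOfProd '' {p ∈ unitCoordinates | Even p.1} := by
  ext q
  constructor
  · rintro ⟨hq, hmod⟩
    obtain ⟨x, y, z, w, rfl⟩ := mem_O_iff.1 hq.1
    exact ⟨(x, y, z, w), ⟨hurwitz_mem_unitsO_iff.1 hq,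
      (inv_ϖ_mul_one_sub_hurwitz_mem_O_iff hq).1 hmod⟩, rfl⟩
  · rintro ⟨p, ⟨hp, heven⟩, rfl⟩
    have hq := hurwitz_mem_unitsO_iff.2 hp
    exact ⟨hq, (inv_ϖ_mul_one_sub_hurwitz_mem_O_iff hq).2 heven⟩

theorem ncard_unitsO : unitsO.ncard = 24 := by
  rw [unitsO_eq_image_hurwitzOfProd, Set.ncard_image_of_injective _ hurwitzOfProd_injective,
    Set.ncard_coe_finset]
  decide +kernel

theorem ncard_congruenceUnits : congruenceUnits.ncard = 8 := by
  rw [congruenceUnits_eq_image_hurwitzOfProd,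
    Set.ncard_image_of_injective _ hurwitzOfProd_injective, ← Finset.coe_filter,
    Set.ncard_coe_finset]
  decide +kernel

end Units

section Isometries

theorem star_mul_self_eq_one {u : ℍ[ℚ]} (hu : u ∈ unitsO) : star u * u = 1 := by
  rw [star_mul_self, hu.2, coe_one]

theorem self_mul_star_eq_one {u : ℍ[ℚ]} (hu : u ∈ unitsO) : u * star u = 1 := by
  rw [self_mul_star, hu.2, coe_one]

theorem star_mem_unitsO {u : ℍ[ℚ]} (hu : u ∈ unitsO) : star u ∈ unitsO :=
  ⟨star_mem_O hu.1, by rw [normSq_star, hu.2]⟩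

theorem mul_mem_unitsO {u v : ℍ[ℚ]} (hu : u ∈ unitsO) (hv : v ∈ unitsO) : u * v ∈ unitsO :=
  ⟨mul_mem hu.1 hv.1, by rw [map_mul, hu.2, hv.2, one_mul]⟩

theorem neg_mem_unitsO {u : ℍ[ℚ]} (hu : u ∈ unitsO) : -u ∈ unitsO :=
  ⟨neg_mem hu.1, by rw [normSq_neg, hu.2]⟩

theorem one_mem_unitsO : 1 ∈ unitsO := ⟨one_mem O, map_one normSq⟩

theorem qi_mem_unitsO : qi ∈ unitsO := ⟨qi_mem_O, by simp [normSq_def']⟩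

theorem conjTranspose_mul_self_fin_two {R : Type*} [CommRing R] (a b c d : ℍ[R]) :
    !![a, b; c, d].conjTranspose * !![a, b; c, d] =
      !![Quaternion.coe (normSq a + normSq c), star a * b + star c * d;
        star (star a * b + star c * d), Quaternion.coe (normSq b + normSq d)] := by
  refine Matrix.ext fun i j => ?_
  fin_cases i <;> fin_cases j <;> simp [Matrix.mul_apply, star_mul_self]

theorem hermitian_fin_two_inj {R : Type*} [CommRing R] {p r p' r' : R} {q q' : ℍ[R]} :
    !![(p : ℍ[R]), q; star q, (r : ℍ[R])] = !![(p' : ℍ[R]), q'; star q', (r' : ℍ[R])] ↔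
      p = p' ∧ q = q' ∧ r = r' := by
  simp only [← Matrix.ext_iff, Fin.forall_fin_two, Matrix.of_apply, Matrix.cons_val_zero,
    Matrix.cons_val_one, coe_inj, star_inj]
  tauto

theorem star_ϖ : star ϖ = 1 + qi := by
  ext <;> simp [ϖ]

theorem M_eq : M = !![Quaternion.coe 2, star ϖ; star (star ϖ), Quaternion.coe 2] := by
  rw [star_star, star_ϖ, M, ϖ]
  rfl

theorem M_eq_conjTranspose_mul_self :
    M = !![ϖ, 1; 0, 1].conjTranspose * !![ϖ, 1; 0, 1] := by
  rw [conjTranspose_mul_self_fin_two, M_eq, normSq_ϖ]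
  norm_num

theorem isometry_iff (a b c d : ℍ[ℚ]) :
    !![a, b; c, d].conjTranspose * M * !![a, b; c, d] = M ↔
      normSq (ϖ * a + c) + normSq c = 2 ∧
      star (ϖ * a + c) * (ϖ * b + d) + star c * d = star ϖ ∧
      normSq (ϖ * b + d) + normSq d = 2 := by
  have hgram : !![a, b; c, d].conjTranspose * M * !![a, b; c, d] =
      !![ϖ * a + c, ϖ * b + d; c, d].conjTranspose * !![ϖ * a + c, ϖ * b + d; c, d] := by
    have hmul : !![ϖ * a + c, ϖ * b + d; c, d] = !![ϖ, 1; 0, 1] * !![a, b; c, d] := by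
      simp
    rw [hmul, M_eq_conjTranspose_mul_self, Matrix.conjTranspose_mul]
    simp only [Matrix.mul_assoc]
  rw [hgram, conjTranspose_mul_self_fin_two, M_eq, hermitian_fin_two_inj]

/-- The diagonal matrix `diag(u, d)` conjugated by `!![ϖ, 1; 0, 1]`; for `u, d ∈ O¹` that are
congruent modulo `ϖ` this is an isometry of `M` over `O`. -/
noncomputable def torus (u d : ℍ[ℚ]) : Matrix (Fin 2) (Fin 2) ℍ[ℚ] :=
  !![ϖ⁻¹ * u * ϖ, ϖ⁻¹ * (u - d); 0, d]

theorem torus_mul_torus (u d u' d' : ℍ[ℚ]) :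
    torus u d * torus u' d' = torus (u * u') (d * d') := by
  simp only [torus, Matrix.mul_fin_two]
  simp [mul_assoc, ϖ_ne_zero, mul_sub, sub_mul]

theorem torus_one_one : torus 1 1 = 1 := by
  simp [torus, ϖ_ne_zero, Matrix.one_fin_two]

theorem torus_apply_mem_O {u d : ℍ[ℚ]} (hu : u ∈ O) (hd : d ∈ O) (hud : ϖ⁻¹ * (u - d) ∈ O)
    (i j : Fin 2) : torus u d i j ∈ O := by
  have hconj : ϖ⁻¹ * (u * ϖ) ∈ O := by
    obtain ⟨n, hn⟩ := exists_normSq_eq_natCast hu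
    refine (inv_ϖ_mul_mem_O_iff (mul_mem hu ϖ_mem_O)).2 ⟨n, ?_⟩
    rw [map_mul, normSq_ϖ, hn, mul_comm, Int.cast_natCast]
  fin_cases i <;> fin_cases j <;> simp_all [torus, mul_assoc, zero_mem]

theorem inv_ϖ_mul_star_sub_star_mem_O {u d : ℍ[ℚ]} (hu : u ∈ O) (hd : d ∈ O)
    (hud : ϖ⁻¹ * (u - d) ∈ O) : ϖ⁻¹ * (star u - star d) ∈ O := by
  rw [inv_ϖ_mul_mem_O_iff (sub_mem hu hd)] at hud
  rwa [← star_sub, inv_ϖ_mul_mem_O_iff (star_mem_O (sub_mem hu hd)), normSq_star]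

theorem isometry_torus {u d : ℍ[ℚ]} (hu : u ∈ unitsO) (hd : d ∈ unitsO) :
    (torus u d).conjTranspose * M * torus u d = M := by
  refine (isometry_iff _ _ _ _).2 ⟨?_, ?_, ?_⟩
  · simp [mul_assoc, ϖ_ne_zero, hu.2, normSq_ϖ]
  · simp [mul_assoc, ϖ_ne_zero, star_mul_self_eq_one hu]
  · norm_num [ϖ_ne_zero, hu.2, hd.2]

/-- The isometry of `M` that exchanges the coordinates `ϖ * v 0 + v 1` and `v 1` of a
vector `v`. -/
noncomputable def coordinateSwap : Matrix (Fin 2) (Fin 2) ℍ[ℚ] := !![-1, 0; ϖ, 1]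

theorem isometry_coordinateSwap :
    coordinateSwap.conjTranspose * M * coordinateSwap = M := by
  refine (isometry_iff _ _ _ _).2 ⟨?_, ?_, ?_⟩ <;> norm_num [normSq_ϖ]

theorem coordinateSwap_mul_self : coordinateSwap * coordinateSwap = 1 := by
  simp [coordinateSwap, Matrix.one_fin_two]

/-- The isometry of `M` that exchanges the two basis vectors up to the unit `i`. -/
def basisSwap : Matrix (Fin 2) (Fin 2) ℍ[ℚ] := !![0, qi; 1, 0]

theorem isometry_basisSwap : basisSwap.conjTranspose * M * basisSwap = M := by
  have hϖ : ϖ * qi = star ϖ := by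
    rw [star_ϖ, ϖ, sub_mul, one_mul, qi_mul_self, sub_neg_eq_add, add_comm]
  refine (isometry_iff _ _ _ _).2 ⟨?_, ?_, ?_⟩
  · norm_num
  · simp [hϖ]
  · norm_num [qi_mem_unitsO.2, normSq_ϖ]

theorem exists_mem_isometryGroup_torus {u d : ℍ[ℚ]} (hu : u ∈ unitsO) (hd : d ∈ unitsO)
    (hud : ϖ⁻¹ * (u - d) ∈ O) : ∃ g ∈ isometryGroup O M, g.val = torus u d := by
  refine ⟨⟨torus u d, torus (star u) (star d), ?_, ?_⟩, ⟨⟨?_, ?_⟩, isometry_torus hu hd⟩, rfl⟩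
  · simp only [torus_mul_torus, self_mul_star_eq_one hu, self_mul_star_eq_one hd, torus_one_one]
  · simp only [torus_mul_torus, star_mul_self_eq_one hu, star_mul_self_eq_one hd, torus_one_one]
  · exact torus_apply_mem_O hu.1 hd.1 hud
  · exact torus_apply_mem_O (star_mem_O hu.1) (star_mem_O hd.1)
      (inv_ϖ_mul_star_sub_star_mem_O hu.1 hd.1 hud)

theorem exists_mem_isometryGroup_coordinateSwap :
    ∃ g ∈ isometryGroup O M, g.val = coordinateSwap := by
  have hmem : ∀ i j, coordinateSwap i j ∈ O := by
    intro i j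
    fin_cases i <;> fin_cases j <;> simp [coordinateSwap, zero_mem, one_mem, ϖ_mem_O]
  exact ⟨⟨coordinateSwap, coordinateSwap, coordinateSwap_mul_self, coordinateSwap_mul_self⟩,
    ⟨⟨hmem, hmem⟩, isometry_coordinateSwap⟩, rfl⟩

theorem exists_mem_isometryGroup_basisSwap :
    ∃ g ∈ isometryGroup O M, g.val = basisSwap := by
  refine ⟨⟨basisSwap, !![0, 1; -qi, 0], ?_, ?_⟩, ⟨⟨?_, ?_⟩, isometry_basisSwap⟩, rfl⟩
  · simp [basisSwap, qi_mul_self, Matrix.one_fin_two]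
  · simp [basisSwap, qi_mul_self, Matrix.one_fin_two]
  · intro i j
    fin_cases i <;> fin_cases j <;> simp [basisSwap, zero_mem, one_mem, qi_mem_O]
  · intro i j
    fin_cases i <;> fin_cases j <;> simp [zero_mem, one_mem, qi_mem_O]

end Isometries

open Matrix.Module MulAction

section Action

variable {R n : Type*} [Ring R] [StarRing R] [Fintype n] [DecidableEq n] {S : Subring R}
  {H : Matrix n n R}

theorem isometryGroup_smul_eq_mulVec (g : isometryGroup S H) (v : n → R) :
    g • v = g.1.val.mulVec v := rfl

theorem mulVec_mem_orbit {A : Matrix n n R} {v w : n → R}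
    (hA : ∃ g ∈ isometryGroup S H, g.val = A) (hv : v ∈ orbit (isometryGroup S H) w) :
    A.mulVec v ∈ orbit (isometryGroup S H) w := by
  obtain ⟨g, hg, rfl⟩ := hA
  exact mem_orbit_of_mem_orbit (⟨g, hg⟩ : isometryGroup S H) hv

end Action

section Orbit

/-- The first basis vector; all of `roots` turns out to be its orbit. -/
def baseRoot : Fin 2 → ℍ[ℚ] := ![1, 0]

/-- The vectors `v ∈ O²` with `v* M v = 2`. -/
def roots : Set (Fin 2 → ℍ[ℚ]) :=
  {v | v 0 ∈ O ∧ v 1 ∈ O ∧ normSq (ϖ * v 0 + v 1) + normSq (v 1) = 2}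

theorem orbit_subset_roots : orbit (isometryGroup O M) baseRoot ⊆ roots := by
  rintro _ ⟨⟨g, hgO, hg⟩, rfl⟩
  have hcol : (⟨g, hgO, hg⟩ : isometryGroup O M) • baseRoot = ![g.val 0 0, g.val 1 0] := by
    rw [isometryGroup_smul_eq_mulVec, Matrix.eta_fin_two g.val]
    simp [baseRoot]
  rw [Matrix.eta_fin_two g.val] at hg
  simp only [hcol]
  exact ⟨hgO.1 0 0, hgO.1 1 0, ((isometry_iff _ _ _ _).1 hg).1⟩

theorem mem_unitsO_of_normSq_ϖ_mul {a : ℍ[ℚ]} (ha : a ∈ O) (h : normSq (ϖ * a) = 2) :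
    a ∈ unitsO := by
  rw [map_mul, normSq_ϖ] at h
  exact ⟨ha, by linarith⟩

theorem exists_congruenceUnits_mul_eq {a c : ℍ[ℚ]} (ha : a ∈ O) (hc : c ∈ unitsO)
    (hu : ϖ * a + c ∈ unitsO) : ∃ e ∈ congruenceUnits,
      a = ϖ⁻¹ * ((1 - e) * (ϖ * a + c)) ∧ c = e * (ϖ * a + c) := by
  set u := ϖ * a + c
  have hcu : c * star u * u = c := by rw [mul_assoc, star_mul_self_eq_one hu, mul_one]
  have hsub : 1 - c * star u = ϖ * (a * star u) := by
    rw [← self_mul_star_eq_one hu, ← sub_mul, add_sub_cancel_right, mul_assoc]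
  refine ⟨c * star u, ⟨mul_mem_unitsO hc (star_mem_unitsO hu), ?_⟩, ?_, hcu.symm⟩
  · rw [hsub, inv_mul_cancel_left₀ ϖ_ne_zero]
    exact mul_mem ha (star_mem_O hu.1)
  · rw [sub_mul, one_mul, hcu, add_sub_cancel_right, inv_mul_cancel_left₀ ϖ_ne_zero]

theorem eq_of_mem_roots {v : Fin 2 → ℍ[ℚ]} (hv : v ∈ roots) :
    (∃ a ∈ unitsO, v = ![a, 0]) ∨ (∃ a ∈ unitsO, v = ![a, -(ϖ * a)]) ∨
      ∃ u ∈ unitsO, ∃ e ∈ congruenceUnits, v = ![ϖ⁻¹ * ((1 - e) * u), e * u] := by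
  obtain ⟨a, c, rfl⟩ : ∃ a c, v = ![a, c] := ⟨v 0, v 1, List.ofFn_inj.1 rfl⟩
  obtain ⟨ha : a ∈ O, hc : c ∈ O, hnorm : normSq (ϖ * a + c) + normSq c = 2⟩ := hv
  have hu : ϖ * a + c ∈ O := add_mem (mul_mem ϖ_mem_O ha) hc
  obtain ⟨m, hm⟩ := exists_normSq_eq_natCast hu
  obtain ⟨n, hn⟩ := exists_normSq_eq_natCast hc
  have hmn : m + n = 2 := by rw [hm, hn] at hnorm; exact_mod_cast hnorm
  obtain ⟨rfl, rfl⟩ | ⟨rfl, rfl⟩ | ⟨rfl, rfl⟩ :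
      m = 2 ∧ n = 0 ∨ m = 0 ∧ n = 2 ∨ m = 1 ∧ n = 1 := by lia
  · obtain rfl : c = 0 := normSq_eq_zero.1 (by exact_mod_cast hn)
    rw [add_zero] at hm
    exact .inl ⟨a, mem_unitsO_of_normSq_ϖ_mul ha (by exact_mod_cast hm), rfl⟩
  · obtain rfl : c = -(ϖ * a) :=
      eq_neg_of_add_eq_zero_right (normSq_eq_zero.1 (by exact_mod_cast hm))
    rw [normSq_neg] at hn
    exact .inr (.inl ⟨a, mem_unitsO_of_normSq_ϖ_mul ha (by exact_mod_cast hn), rfl⟩)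
  · have hu1 : ϖ * a + c ∈ unitsO := ⟨hu, by exact_mod_cast hm⟩
    obtain ⟨e, he, hae, hce⟩ := exists_congruenceUnits_mul_eq ha ⟨hc, by exact_mod_cast hn⟩ hu1
    exact .inr (.inr ⟨_, hu1, e, he, by rw [← hae, ← hce]⟩)

theorem zero_unit_mem_orbit {u : ℍ[ℚ]} (hu : u ∈ unitsO) :
    ![0, u] ∈ orbit (isometryGroup O M) baseRoot := by
  have hbasis : (![0, 1] : Fin 2 → ℍ[ℚ]) ∈ orbit (isometryGroup O M) baseRoot := by
    simpa [basisSwap, baseRoot] using mulVec_mem_orbit exists_mem_isometryGroup_basisSwap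
      (mem_orbit_self baseRoot)
  have htorus := exists_mem_isometryGroup_torus hu hu (by simp [zero_mem])
  simpa [torus] using mulVec_mem_orbit htorus hbasis

theorem unit_zero_mem_orbit {a : ℍ[ℚ]} (ha : a ∈ unitsO) :
    ![a, 0] ∈ orbit (isometryGroup O M) baseRoot := by
  have hia := zero_unit_mem_orbit (neg_mem_unitsO (mul_mem_unitsO qi_mem_unitsO ha))
  simpa [basisSwap, ← mul_assoc, qi_mul_self] using
    mulVec_mem_orbit exists_mem_isometryGroup_basisSwap hia

theorem unit_neg_ϖ_mul_mem_orbit {a : ℍ[ℚ]} (ha : a ∈ unitsO) :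
    ![a, -(ϖ * a)] ∈ orbit (isometryGroup O M) baseRoot := by
  simpa [coordinateSwap] using mulVec_mem_orbit exists_mem_isometryGroup_coordinateSwap
    (unit_zero_mem_orbit (neg_mem_unitsO ha))

theorem generic_root_mem_orbit {u e : ℍ[ℚ]} (hu : u ∈ unitsO) (he : e ∈ congruenceUnits) :
    ![ϖ⁻¹ * ((1 - e) * u), e * u] ∈ orbit (isometryGroup O M) baseRoot := by
  simpa [torus, mul_assoc] using mulVec_mem_orbit
    (exists_mem_isometryGroup_torus one_mem_unitsO he.1 he.2) (zero_unit_mem_orbit hu)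

theorem orbit_baseRoot_eq : orbit (isometryGroup O M) baseRoot =
    (fun a => ![a, 0]) '' unitsO ∪ ((fun a => ![a, -(ϖ * a)]) '' unitsO ∪
      (fun p => ![ϖ⁻¹ * ((1 - p.2) * p.1), p.2 * p.1]) '' (unitsO ×ˢ congruenceUnits)) := by
  refine Set.Subset.antisymm (fun v hv => ?_) ?_
  · rcases eq_of_mem_roots (orbit_subset_roots hv) with
      ⟨a, ha, rfl⟩ | ⟨a, ha, rfl⟩ | ⟨u, hu, e, he, rfl⟩
    · exact .inl ⟨a, ha, rfl⟩
    · exact .inr (.inl ⟨a, ha, rfl⟩)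
    · exact .inr (.inr ⟨(u, e), ⟨hu, he⟩, rfl⟩)
  · rintro _ (⟨a, ha, rfl⟩ | ⟨a, ha, rfl⟩ | ⟨⟨u, e⟩, ⟨hu, he⟩, rfl⟩)
    · exact unit_zero_mem_orbit ha
    · exact unit_neg_ϖ_mul_mem_orbit ha
    · exact generic_root_mem_orbit hu he

end Orbit

section Count

theorem injOn_generic_root :
    Set.InjOn (fun p : ℍ[ℚ] × ℍ[ℚ] => ![ϖ⁻¹ * ((1 - p.2) * p.1), p.2 * p.1])
      (unitsO ×ˢ congruenceUnits) := by
  rintro ⟨u, e⟩ ⟨hu, -⟩ ⟨u', e'⟩ - h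
  have h0 : (1 - e) * u = (1 - e') * u' :=
    mul_left_cancel₀ (inv_ne_zero ϖ_ne_zero) (congrFun h 0)
  have h1 : e * u = e' * u' := congrFun h 1
  obtain rfl : u = u' := by simpa [sub_mul, h1] using h0
  have hu0 : u ≠ 0 := by rintro rfl; simpa using hu.2
  rw [mul_right_cancel₀ hu0 h1]

theorem ncard_orbit_baseRoot : (orbit (isometryGroup O M) baseRoot).ncard = 240 := by
  have hunits : unitsO.Finite := Set.finite_of_ncard_pos (by rw [ncard_unitsO]; norm_num)
  have hcong : congruenceUnits.Finite :=
    Set.finite_of_ncard_pos (by rw [ncard_congruenceUnits]; norm_num)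
  have hfirst : Function.Injective fun a : ℍ[ℚ] => ![a, 0] :=
    fun a b hab => congrFun hab 0
  have hsecond : Function.Injective fun a : ℍ[ℚ] => ![a, -(ϖ * a)] :=
    fun a b hab => congrFun hab 0
  rw [orbit_baseRoot_eq, Set.ncard_union_eq ?_ (hunits.image _)
    ((hunits.image _).union ((hunits.prod hcong).image _)),
    Set.ncard_union_eq ?_ (hunits.image _) ((hunits.prod hcong).image _),
    Set.ncard_image_of_injective _ hfirst, Set.ncard_image_of_injective _ hsecond,
    injOn_generic_root.ncard_image, Set.ncard_prod, ncard_unitsO, ncard_congruenceUnits]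
  · rw [Set.disjoint_left]
    rintro _ ⟨a, ha, rfl⟩ ⟨⟨u, e⟩, ⟨hu, he⟩, h⟩
    have hnorm : normSq (e * u) = normSq (-(ϖ * a)) := congrArg normSq (congrFun h 1)
    norm_num [hu.2, he.1.2, ha.2, normSq_ϖ] at hnorm
  · rw [Set.disjoint_left]
    rintro _ ⟨a, -, rfl⟩ (⟨b, hb, h⟩ | ⟨⟨u, e⟩, ⟨hu, he⟩, h⟩)
    · have hnorm : normSq (-(ϖ * b)) = normSq 0 := congrArg normSq (congrFun h 1)
      norm_num [hb.2, normSq_ϖ] at hnorm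
    · have hnorm : normSq (e * u) = normSq 0 := congrArg normSq (congrFun h 1)
      norm_num [hu.2, he.1.2] at hnorm

theorem eq_torus_and_mem_of_smul_eq {g : isometryGroup O M}
    (h : g • baseRoot = baseRoot) :
    g.1.val = torus 1 (g.1.val 1 1) ∧ g.1.val 1 1 ∈ congruenceUnits := by
  obtain ⟨g, hgO, hg⟩ := g
  rw [isometryGroup_smul_eq_mulVec] at h
  have h0 : g.val 0 0 = 1 := by simpa [baseRoot, Matrix.mulVec, dotProduct] using congrFun h 0
  have h1 : g.val 1 0 = 0 := by simpa [baseRoot, Matrix.mulVec, dotProduct] using congrFun h 1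
  rw [Matrix.eta_fin_two g.val, h0, h1, isometry_iff] at hg
  obtain ⟨-, hoff, hnorm⟩ := hg
  have hrow : ϖ * g.val 0 1 + g.val 1 1 = 1 :=
    mul_left_cancel₀ (star_ne_zero.2 ϖ_ne_zero) (by simpa using hoff)
  have hb : g.val 0 1 = ϖ⁻¹ * (1 - g.val 1 1) := by
    rw [← hrow, add_sub_cancel_right, inv_mul_cancel_left₀ ϖ_ne_zero]
  rw [hrow, map_one] at hnorm
  refine ⟨?_, ⟨hgO.1 1 1, by linarith⟩, hb ▸ hgO.1 0 1⟩
  rw [Matrix.eta_fin_two g.val, h0, h1, hb]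
  simp [torus, ϖ_ne_zero]

theorem card_stabilizer_baseRoot :
    Nat.card (stabilizer (isometryGroup O M) baseRoot) = 8 := by
  rw [← ncard_congruenceUnits, ← Nat.card_coe_set_eq]
  refine Nat.card_eq_of_bijective
    (fun g => ⟨g.1.1.val 1 1, (eq_torus_and_mem_of_smul_eq g.2).2⟩) ⟨?_, ?_⟩
  · intro g g' h
    have hd : g.1.1.val 1 1 = g'.1.1.val 1 1 := congrArg Subtype.val h
    refine Subtype.ext (Subtype.ext (Units.ext ?_))
    rw [(eq_torus_and_mem_of_smul_eq g.2).1, (eq_torus_and_mem_of_smul_eq g'.2).1, hd]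
  · rintro ⟨d, hd⟩
    obtain ⟨g, hg, hgd⟩ := exists_mem_isometryGroup_torus one_mem_unitsO hd.1 hd.2
    refine ⟨⟨⟨g, hg⟩, ?_⟩, ?_⟩
    · rw [mem_stabilizer_iff, isometryGroup_smul_eq_mulVec, hgd]
      simp [torus, ϖ_ne_zero, baseRoot]
    · simp [hgd, torus]

end Count

/-- There are exactly `1920` matrices `A`, invertible in `M₂(O)`, with `A* M A = M`,
where `A*` is the conjugate transpose of `A`. -/
theorem stmt_9 :
    Nat.card {A : Matrix (Fin 2) (Fin 2) ℍ[ℚ] //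
      (∀ i j, A i j ∈ O) ∧
      (∃ B : Matrix (Fin 2) (Fin 2) ℍ[ℚ],
        (∀ i j, B i j ∈ O) ∧ A * B = 1 ∧ B * A = 1) ∧
      A.conjTranspose * M * A = M} = 1920 := by
  calc _ = Nat.card (isometryGroup O M) := card_subtype_isometry_eq_card_isometryGroup O M
    _ = Nat.card (orbit (isometryGroup O M) baseRoot) *
        Nat.card (stabilizer (isometryGroup O M) baseRoot) := by
      rw [← Nat.card_prod, Nat.card_congr (orbitProdStabilizerEquivGroup _ baseRoot)]
    _ = 240 * 8 := by
      rw [Nat.card_coe_set_eq, ncard_orbit_baseRoot, card_stabilizer_baseRoot]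
    _ = 1920 := by norm_num

end Stmt9
end
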